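/- arXiv:1807.04963 — 6 statements merged into one kernel-verified Lean document; each statement's English description precedes it below -/
import Mathlib

section
/- Let n ≥ 1 and let ∅ ⊊ S₁ ⊊ S₂ ⊊ ⋯ ⊊ Sₙ ⊊ [n+1] be a maximal chain of nonempty proper subsets of [n+1]. Then the determinant of the n×n integer matrix whose columns are u_{S₁}, u_{S₂}, …, u_{Sₙ} equals 1 or −1. -/
/-- The standard basis vector `e_s` of `ℤⁿ` for `s ∈ [n+1]`, with the convention
that the vector corresponding to the last element `n+1` is zero. -/
def permEps (n : ℕ) (s : Fin (n + 1)) : Fin n → ℤ :=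
  fun i => if (i : ℕ) = (s : ℕ) then 1 else 0

/-- The ray generator `u_S` of the permutohedral fan, for `∅ ⊊ S ⊊ [n+1]`:
`u_S = ∑_{s ∈ S} e_s` if `n+1 ∉ S`, and `u_S = -∑_{s ∈ [n+1] ∖ S} e_s` if `n+1 ∈ S`. -/
def permU (n : ℕ) (S : Finset (Fin (n + 1))) : Fin n → ℤ :=
  if Fin.last n ∈ S then -∑ s ∈ Sᶜ, permEps n s else ∑ s ∈ S, permEps n s

theorem permU_apply_aux (n : ℕ) (S : Finset (Fin (n + 1))) (i : Fin n) :
    permU n S i = (if i.castSucc ∈ S then 1 else 0) - (if Fin.last n ∈ S then 1 else 0) := by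
  have key : ∀ A : Finset (Fin (n + 1)),
      (∑ s ∈ A, permEps n s) i = if i.castSucc ∈ A then 1 else 0 := by
    intro A
    rw [Finset.sum_apply]
    have : ∀ s ∈ A, permEps n s i = if i.castSucc = s then 1 else 0 := by
      intro s _
      simp [permEps, Fin.ext_iff]
    rw [Finset.sum_congr rfl this, Finset.sum_ite_eq]
  unfold permU
  split_ifs with h1 h2 h2 <;> simp [key, h2]

/-- For any maximal chain `∅ ⊊ S₁ ⊊ ⋯ ⊊ Sₙ ⊊ [n+1]` of nonempty proper subsets of
`[n+1]`, the determinant of the matrix with columns `u_{S₁}, …, u_{Sₙ}` is `±1`. -/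
theorem det_permU_chain_eq_one_or_neg_one (n : ℕ) (hn : 1 ≤ n)
    (S : Fin n → Finset (Fin (n + 1)))
    (hne : ∀ p, (S p).Nonempty)
    (hproper : ∀ p, S p ≠ Finset.univ)
    (hchain : ∀ p q, p < q → S p ⊂ S q) :
    (Matrix.of fun i p => permU n (S p) i).det = 1 ∨
      (Matrix.of fun i p => permU n (S p) i).det = -1 := by
  let T : ℕ → Finset (Fin (n + 1)) := fun k =>
    if k = 0 then ∅ else if h : k - 1 < n then S ⟨k - 1, h⟩ else Finset.univ
  have hT0 : T 0 = ∅ := by simp [T]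
  have hTn : T (n + 1) = Finset.univ := by simp [T]
  have hTs : ∀ k (h : k < n), T (k + 1) = S ⟨k, h⟩ := by
    intro k h
    simp [T, h]
  have hstep : ∀ k, k ≤ n → T k ⊂ T (k + 1) := by
    intro k hk
    rcases k with _ | k
    · rw [hT0, hTs 0 (by omega)]
      exact Finset.empty_ssubset.2 (hne _)
    · rw [hTs k (by omega)]
      rcases Nat.lt_or_ge (k + 1) n with h | h
      · rw [hTs (k + 1) h]
        exact hchain _ _ (by simp [Fin.lt_def])
      · have : k + 1 = n := by omega
        rw [this, hTn]
        exact Finset.ssubset_univ_iff.2 (hproper _)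
  have hlow : ∀ k, k ≤ n + 1 → k ≤ (T k).card := by
    intro k
    induction k with
    | zero => intro _; omega
    | succ k ih =>
      intro h
      have := Finset.card_lt_card (hstep k (by omega))
      have := ih (by omega)
      omega
  have hup : ∀ k, k ≤ n + 1 → (T (n + 1 - k)).card + k ≤ n + 1 := by
    intro k
    induction k with
    | zero => intro _; simp [hTn]
    | succ k ih =>
      intro h
      have h1 := Finset.card_lt_card (hstep (n + 1 - (k + 1)) (by omega))
      have h2 := ih (by omega)
      have h3 : n + 1 - (k + 1) + 1 = n + 1 - k := by omega
      rw [h3] at h1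
      omega
  have hcard : ∀ k, k ≤ n + 1 → (T k).card = k := by
    intro k hk
    have h1 := hlow k hk
    have h2 := hup (n + 1 - k) (by omega)
    have h3 : n + 1 - (n + 1 - k) = k := by omega
    rw [h3] at h2
    omega
  set M : Matrix (Fin n) (Fin n) ℤ := Matrix.of fun i p => permU n (S p) i with hM
  have hmem : ∀ k, permU n (T k) ∈ LinearMap.range M.mulVecLin := by
    intro k
    by_cases h0 : k = 0
    · have : permU n (T k) = 0 := by
        funext i
        simp [permU_apply_aux, h0, hT0]
      rw [this]
      exact Submodule.zero_mem _
    by_cases h : k - 1 < n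
    · refine ⟨Pi.single ⟨k - 1, h⟩ 1, ?_⟩
      funext i
      simp [T, h0, h, hM]
    · have : permU n (T k) = 0 := by
        funext i
        simp [permU_apply_aux, T, h0, h]
      rw [this]
      exact Submodule.zero_mem _
  have hbasis : ∀ i : Fin n, (Pi.single i 1 : Fin n → ℤ) ∈ LinearMap.range M.mulVecLin := by
    intro i
    have hex : ∃ k, i.castSucc ∈ T k := ⟨n + 1, by simp [hTn]⟩
    classical
    have hk := Nat.find_spec hex
    have hle : Nat.find hex ≤ n + 1 := Nat.find_min' hex (by simp [hTn])
    have hmin := fun m => Nat.find_min hex (m := m)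
    generalize Nat.find hex = k at hk hle hmin
    rcases k with _ | j
    · simp [hT0] at hk
    have hj : i.castSucc ∉ T j := hmin j (by omega)
    have hins : insert i.castSucc (T j) = T (j + 1) := by
      apply Finset.eq_of_subset_of_card_le
      · exact Finset.insert_subset hk (hstep j (by omega)).1
      · rw [Finset.card_insert_of_notMem hj, hcard j (by omega), hcard (j + 1) hle]
    have : (Pi.single i 1 : Fin n → ℤ) = permU n (T (j + 1)) - permU n (T j) := by
      funext l
      rw [Pi.sub_apply, ← hins, permU_apply_aux, permU_apply_aux]
      have hl : Fin.last n ≠ i.castSucc := (Fin.castSucc_lt_last i).ne'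
      by_cases hli : l = i
      · subst hli
        simp [hj, hl]
      · simp [hli, hl]
    rw [this]
    exact Submodule.sub_mem _ (hmem _) (hmem _)
  have hsurj : Function.Surjective M.mulVec := by
    intro v
    have : v ∈ LinearMap.range M.mulVecLin := by
      rw [pi_eq_sum_univ' v]
      refine Submodule.sum_mem _ fun i _ => Submodule.smul_mem _ _ ?_
      convert hbasis i using 1
    obtain ⟨w, hw⟩ := this
    exact ⟨w, hw⟩
  have hu : IsUnit M := Matrix.mulVec_surjective_iff_isUnit.1 hsurj
  exact Int.isUnit_iff.1 ((Matrix.isUnit_iff_isUnit_det M).1 hu)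
end

section
/- Fix flag Bott data n₁,…,n_m and matrices A^{(j)}_ℓ as in the context. For every m-tuple (S^1_•,…,S^m_•), where each S^ℓ_• : ∅ ⊊ S^ℓ_1 ⊊ ⋯ ⊊ S^ℓ_{n_ℓ} ⊊ [n_ℓ+1] is a maximal chain of nonempty proper subsets of [n_ℓ+1], the n vectors u^ℓ_{S^ℓ_p} (1 ≤ p ≤ n_ℓ, 1 ≤ ℓ ≤ m) form a ℤ-basis of ℤⁿ; equivalently, the n×n integer matrix with these vectors as columns has determinant 1 or −1. -/
/-- Standard basis vector `ε_{p,k}` of `ℤⁿ`, `n = n₁ + ⋯ + n_m`, whose coordinates are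
indexed by pairs `(q, i)` with `q ∈ [m]`, `i ∈ [n_q]`; by convention
`ε_{p, n_p+1} = 0`. -/
def fbEps (m : ℕ) (n : Fin m → ℕ) (p : Fin m) (k : Fin (n p + 1)) :
    (Σ q : Fin m, Fin (n q)) → ℤ :=
  fun x => if x.1 = p ∧ (x.2 : ℕ) = (k : ℕ) then 1 else 0

/-- The ray generator `u^ℓ_S ∈ ℤⁿ` of the fan of the generic torus orbit closure in
the flag Bott manifold determined by the integer matrices `A^{(j)}_ℓ`, for
`∅ ⊊ S ⊊ [n_ℓ+1]` and `d = |[n_ℓ+1] ∖ S|`. -/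
def fbU (m : ℕ) (n : Fin m → ℕ)
    (A : ∀ j l : Fin m, Matrix (Fin (n j + 1)) (Fin (n l + 1)) ℤ)
    (l : Fin m) (S : Finset (Fin (n l + 1))) : (Σ q : Fin m, Fin (n q)) → ℤ :=
  if Fin.last (n l) ∈ S then
    -(∑ s ∈ Sᶜ, fbEps m n l s) +
      ∑ p : Fin m, ∑ k : Fin (n p + 1),
        (if l < p then
            ∑ z ∈ Finset.univ.filter (fun z : Fin (n l + 1) => (z : ℕ) < Sᶜ.card),
              A p l k z
          else 0) • fbEps m n p k
  else
    (∑ s ∈ S, fbEps m n l s) -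
      ∑ p : Fin m, ∑ k : Fin (n p + 1),
        (if l < p then
            ∑ z ∈ Finset.univ.filter (fun z : Fin (n l + 1) => Sᶜ.card ≤ (z : ℕ)),
              A p l k z
          else 0) • fbEps m n p k

theorem fb_chain_det (k : ℕ) (T : Fin k → Finset (Fin k)) (hne : ∀ p, (T p).Nonempty)
    (hT : ∀ p q, p < q → T p ⊂ T q) :
    IsUnit (Matrix.of fun i p : Fin k => if i ∈ T p then (1 : ℤ) else 0).det := by
  have hex : ∀ p, ∃ x, x ∈ T p ∧ ∀ q, q < p → x ∉ T q := by
    intro p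
    rcases Nat.eq_zero_or_pos p.1 with h0 | h0
    · obtain ⟨x, hx⟩ := hne p
      exact ⟨x, hx, fun q hq => absurd (Fin.lt_def.mp hq) (by omega)⟩
    · have hlt : (⟨p.1 - 1, by omega⟩ : Fin k) < p := Fin.lt_def.mpr (by simp; omega)
      obtain ⟨x, hx, hx'⟩ := Finset.exists_of_ssubset (hT _ _ hlt)
      refine ⟨x, hx, fun q hq hxq => hx' ?_⟩
      rcases eq_or_lt_of_le (show q ≤ (⟨p.1 - 1, by omega⟩ : Fin k) from
        Fin.le_def.mpr (by have := Fin.lt_def.mp hq; simp; omega)) with h | h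
      · exact h ▸ hxq
      · exact (hT _ _ h).1 hxq
  choose f hf hf' using hex
  have hinj : Function.Injective f := by
    intro p q hpq
    rcases lt_trichotomy p q with h | h | h
    · exact absurd (hpq ▸ hf p) (hf' q p h)
    · exact h
    · exact absurd (hpq ▸ hf q) (hf' p q h)
  let σ : Equiv.Perm (Fin k) := Equiv.ofBijective f (Finite.injective_iff_bijective.mp hinj)
  have hdet := Matrix.det_permute σ (Matrix.of fun i p : Fin k => if i ∈ T p then (1 : ℤ) else 0)
  have h1 : ((Matrix.of fun i p : Fin k => if i ∈ T p then (1 : ℤ) else 0).submatrix σ id).det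
      = 1 := by
    rw [Matrix.det_of_isUpperTriangular]
    · apply Finset.prod_eq_one
      intro p _
      simp [σ, hf p]
    · intro i j hij
      simp [σ, hf' i j hij]
  rw [h1] at hdet
  exact IsUnit.of_mul_eq_one_right _ hdet.symm

theorem fb_block_det (k : ℕ) (S : Fin k → Finset (Fin (k + 1))) (hne : ∀ p, (S p).Nonempty)
    (hproper : ∀ p, S p ≠ Finset.univ) (hT : ∀ p q, p < q → S p ⊂ S q) :
    IsUnit (Matrix.of fun i p : Fin k => (if i.castSucc ∈ S p then (1 : ℤ) else 0) -
      (if Fin.last k ∈ S p then 1 else 0)).det := by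
  let T : Fin (k + 1) → Finset (Fin (k + 1)) := Fin.lastCases Finset.univ S
  have hTl : T (Fin.last k) = Finset.univ := by simp [T]
  have hTc : ∀ p : Fin k, T p.castSucc = S p := by intro p; simp [T]
  have hC := fb_chain_det (k + 1) T
    (by
      intro p
      refine Fin.lastCases ?_ (fun p => ?_) p
      · rw [hTl]; exact Finset.univ_nonempty
      · rw [hTc]; exact hne p)
    (by
      intro p q
      refine Fin.lastCases ?_ (fun p => ?_) p
      · intro h; exact absurd h (not_lt.mpr (Fin.le_last q))
      · refine Fin.lastCases ?_ (fun q => ?_) q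
        · intro _
          rw [hTl, hTc]
          exact Finset.ssubset_univ_iff.mpr (hproper p)
        · intro h
          rw [hTc, hTc]
          exact hT p q (by simpa using h))
  let C' : Matrix (Fin (k + 1)) (Fin (k + 1)) ℤ := Matrix.of fun i p =>
    (if i ∈ T p then (1 : ℤ) else 0) +
      (if i = Fin.last k then 0 else -1) * (if Fin.last k ∈ T p then 1 else 0)
  have h1 : C'.det = (Matrix.of fun i p => if i ∈ T p then (1 : ℤ) else 0).det :=
    Matrix.det_eq_of_forall_row_eq_smul_add_const
      (fun i => if i = Fin.last k then 0 else -1) (Fin.last k) (by simp) (fun i j => rfl)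
  rw [← h1, Matrix.det_succ_column C' (Fin.last k), Fin.sum_univ_castSucc] at hC
  have h0 : ∀ i : Fin k, C' i.castSucc (Fin.last k) = 0 := by
    intro i
    simp [C', hTl, Fin.castSucc_ne_last]
  have h2 : C' (Fin.last k) (Fin.last k) = 1 := by simp [C', hTl]
  simp only [h0, h2] at hC
  simp only [mul_zero, zero_mul, Finset.sum_const_zero, zero_add, mul_one] at hC
  have h3 := isUnit_of_mul_isUnit_right hC
  convert h3 using 2
  ext i p
  simp [C', hTc, Fin.castSucc_ne_last, sub_eq_add_neg]
  split_ifs <;> simp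

theorem fb_sum_zero (m : ℕ) (n : Fin m → ℕ) (l : Fin m) (c : ∀ p : Fin m, Fin (n p + 1) → ℤ)
    (x : Σ q : Fin m, Fin (n q)) (h : ¬ l < x.1) :
    (∑ p : Fin m, ∑ k : Fin (n p + 1), (if l < p then c p k else 0) • fbEps m n p k) x = 0 := by
  simp only [Finset.sum_apply, Pi.smul_apply]
  refine Finset.sum_eq_zero fun p _ => Finset.sum_eq_zero fun k _ => ?_
  by_cases hp : l < p
  · have : x.1 ≠ p := by rintro rfl; exact h hp
    simp [fbEps, this]
  · simp [hp]

theorem fbU_apply (m : ℕ) (n : Fin m → ℕ)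
    (A : ∀ j l : Fin m, Matrix (Fin (n j + 1)) (Fin (n l + 1)) ℤ)
    (l : Fin m) (S : Finset (Fin (n l + 1))) (x : Σ q : Fin m, Fin (n q)) (h : ¬ l < x.1) :
    fbU m n A l S x = if Fin.last (n l) ∈ S then -(∑ s ∈ Sᶜ, fbEps m n l s x)
      else ∑ s ∈ S, fbEps m n l s x := by
  unfold fbU
  split_ifs with hS
  · rw [Pi.add_apply, fb_sum_zero m n l _ x h]
    simp
  · rw [Pi.sub_apply, fb_sum_zero m n l _ x h]
    simp

theorem fb_sum_eps (m : ℕ) (n : Fin m → ℕ) (l : Fin m) (S : Finset (Fin (n l + 1)))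
    (i : Fin (n l)) :
    ∑ s ∈ S, fbEps m n l s ⟨l, i⟩ = if i.castSucc ∈ S then 1 else 0 := by
  rw [← Finset.sum_ite_eq S i.castSucc (fun _ => (1 : ℤ))]
  refine Finset.sum_congr rfl fun s _ => ?_
  simp [fbEps, Fin.ext_iff]

/-- For any `m`-tuple of maximal chains `S^ℓ_• : ∅ ⊊ S^ℓ_1 ⊊ ⋯ ⊊ S^ℓ_{n_ℓ} ⊊ [n_ℓ+1]`,
the `n` vectors `u^ℓ_{S^ℓ_p}` form a `ℤ`-basis of `ℤⁿ`; equivalently the matrix with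
these vectors as columns has determinant `±1`. -/
theorem det_fbU_chains_eq_one_or_neg_one (m : ℕ) (hm : 1 ≤ m)
    (n : Fin m → ℕ) (hn : ∀ l, 1 ≤ n l)
    (A : ∀ j l : Fin m, Matrix (Fin (n j + 1)) (Fin (n l + 1)) ℤ)
    (S : ∀ l : Fin m, Fin (n l) → Finset (Fin (n l + 1)))
    (hne : ∀ l p, (S l p).Nonempty)
    (hproper : ∀ l p, S l p ≠ Finset.univ)
    (hchain : ∀ l, ∀ p q, p < q → S l p ⊂ S l q) :
    (Matrix.of fun i x : Σ q : Fin m, Fin (n q) => fbU m n A x.1 (S x.1 x.2) i).det = 1 ∨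
      (Matrix.of fun i x : Σ q : Fin m, Fin (n q) => fbU m n A x.1 (S x.1 x.2) i).det = -1 := by
  have hu : IsUnit (Matrix.of fun i x : Σ q : Fin m, Fin (n q) =>
      fbU m n A x.1 (S x.1 x.2) i).det := by
    set M := (Matrix.of fun i x : Σ q : Fin m, Fin (n q) => fbU m n A x.1 (S x.1 x.2) i) with hM
    have htri : M.transpose.BlockTriangular (fun x => x.1) := by
      intro i j hij
      have h1 : ¬ i.1 < j.1 := not_lt.mpr (le_of_lt hij)
      have h2 : j.1 ≠ i.1 := ne_of_lt hij
      simp only [Matrix.transpose_apply, hM, Matrix.of_apply]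
      rw [fbU_apply m n A _ _ _ h1]
      simp [fbEps, h2]
    rw [← Matrix.det_transpose, htri.det_fintype]
    rw [IsUnit.prod_univ_iff]
    intro l
    let e : Fin (n l) ≃ {a : Σ q : Fin m, Fin (n q) // a.1 = l} :=
      { toFun := fun i => ⟨⟨l, i⟩, rfl⟩
        invFun := fun a => Fin.cast (congrArg n a.2) a.1.2
        left_inv := fun i => rfl
        right_inv := by
          rintro ⟨⟨q, i⟩, h⟩
          subst h
          rfl }
    rw [← Matrix.det_submatrix_equiv_self e, ← Matrix.det_transpose]
    have hb := fb_block_det (n l) (S l) (hne l) (hproper l) (hchain l)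
    refine (congrArg (fun X : Matrix (Fin (n l)) (Fin (n l)) ℤ => IsUnit X.det) ?_).mpr hb
    ext i p
    change fbU m n A l (S l p) ⟨l, i⟩ = _
    rw [fbU_apply m n A l (S l p) ⟨l, i⟩ (lt_irrefl l)]
    rw [fb_sum_eps, fb_sum_eps]
    by_cases h1 : Fin.last (n l) ∈ S l p <;> by_cases h2 : i.castSucc ∈ S l p <;> simp [h1, h2]
  exact Int.isUnit_iff.mp hu
end

section
/- Let n ≥ 1. For every x ∈ ℝⁿ there exists a maximal chain ∅ ⊊ S₁ ⊊ S₂ ⊊ ⋯ ⊊ Sₙ ⊊ [n+1] of nonempty proper subsets of [n+1] and nonnegative real numbers a₁,…,aₙ such that x = a₁ u_{S₁} + ⋯ + aₙ u_{Sₙ}. In other words, the cones Cone(u_{S₁},…,u_{Sₙ}) over all maximal chains cover ℝⁿ (completeness of the permutohedral fan). -/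
theorem perm_tele (n : ℕ) (w : Fin (n + 1) → ℝ) :
    ∑ p : Fin n, (w p.castSucc - w p.succ) = w 0 - w (Fin.last n) := by
  induction n with
  | zero => simp
  | succ m ih =>
    rw [Fin.sum_univ_castSucc]
    have := ih (fun k => w k.castSucc)
    simp only [Fin.castSucc_zero, ← Fin.succ_castSucc] at this ⊢
    rw [this, Fin.succ_last]
    ring

theorem perm_tele_ind (n : ℕ) (z : Fin (n + 1) → ℝ) (j : Fin (n + 1)) :
    ∑ p : Fin n, (z p.castSucc - z p.succ) * (if j ≤ p.castSucc then (1 : ℝ) else 0)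
      = z j - z (Fin.last n) := by
  have h := perm_tele n (fun k => z (max j k))
  rw [max_eq_left (Fin.zero_le j), max_eq_right (Fin.le_last j)] at h
  rw [← h]
  refine Finset.sum_congr rfl fun p _ => ?_
  by_cases hj : j ≤ p.castSucc
  · have h2 : j ≤ p.succ := hj.trans (Fin.castSucc_lt_succ).le
    simp [hj, h2]
  · have h2 : p.succ ≤ j := by
      rw [Fin.le_def] at *
      simp at *
      omega
    rw [if_neg hj, max_eq_left (not_le.mp hj).le, max_eq_left h2]
    ring

theorem permU_eq (n : ℕ) (S : Finset (Fin (n + 1))) (i : Fin n) :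
    (permU n S i : ℝ) = (if i.castSucc ∈ S then 1 else 0) - (if Fin.last n ∈ S then 1 else 0) := by
  have key : ∀ T : Finset (Fin (n + 1)),
      (∑ s ∈ T, permEps n s) i = if i.castSucc ∈ T then 1 else 0 := by
    intro T
    have : ∀ s : Fin (n + 1), permEps n s i = if i.castSucc = s then 1 else 0 := by
      intro s
      simp [permEps, Fin.ext_iff]
    simp [Finset.sum_apply, this]
  unfold permU
  split_ifs with h1 h2 h2
  all_goals simp [key, h2]

/-- Completeness of the permutohedral fan: every `x ∈ ℝⁿ` is a nonnegative
combination of `u_{S₁}, …, u_{Sₙ}` for some maximal chain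
`∅ ⊊ S₁ ⊊ ⋯ ⊊ Sₙ ⊊ [n+1]` of nonempty proper subsets of `[n+1]`. -/
theorem permutohedral_fan_complete (n : ℕ) (hn : 1 ≤ n) (x : Fin n → ℝ) :
    ∃ S : Fin n → Finset (Fin (n + 1)),
      ((∀ p, (S p).Nonempty) ∧ (∀ p, S p ≠ Finset.univ) ∧
        (∀ p q, p < q → S p ⊂ S q)) ∧
      ∃ a : Fin n → ℝ, (∀ p, 0 ≤ a p) ∧
        ∀ i, x i = ∑ p, a p * (permU n (S p) i : ℝ) := by
  classical
  let y : Fin (n + 1) → ℝ := Fin.snoc x 0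
  let σ := Tuple.sort (fun k => - y k)
  have hσ : Monotone ((fun k => - y k) ∘ σ) := Tuple.monotone_sort _
  have hmem : ∀ (p : Fin n) (k : Fin (n + 1)),
      k ∈ Finset.univ.filter (fun k => σ.symm k ≤ p.castSucc) ↔ σ.symm k ≤ p.castSucc := by
    intro p k
    simp
  refine ⟨fun p => Finset.univ.filter (fun k => σ.symm k ≤ p.castSucc), ⟨?_, ?_, ?_⟩,
    fun p => y (σ p.castSucc) - y (σ p.succ), ?_, ?_⟩
  · intro p
    exact ⟨σ 0, by rw [hmem]; simp⟩
  · intro p h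
    beta_reduce at h
    have h1 := (hmem p (σ (Fin.last n))).1 (by rw [h]; simp)
    rw [Equiv.symm_apply_apply] at h1
    exact absurd h1 (not_le.mpr (Fin.castSucc_lt_last p))
  · intro p q hpq
    have hlt : p.castSucc < q.castSucc := hpq
    rw [Finset.ssubset_iff_of_subset]
    · refine ⟨σ q.castSucc, ?_, ?_⟩
      · rw [hmem]; simp
      · rw [hmem, Equiv.symm_apply_apply]
        exact not_le.mpr hlt
    · intro k hk
      rw [hmem] at hk ⊢
      exact hk.trans hlt.le
  · intro p
    have := hσ (Fin.castSucc_lt_succ (i := p)).le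
    simp only [Function.comp] at this
    linarith
  · intro i
    simp only [permU_eq, hmem, mul_sub, Finset.sum_sub_distrib]
    have h1 := perm_tele_ind n (fun k => y (σ k)) (σ.symm i.castSucc)
    have h2 := perm_tele_ind n (fun k => y (σ k)) (σ.symm (Fin.last n))
    simp only [Equiv.apply_symm_apply] at h1 h2
    rw [h1, h2]
    simp [y]
end

section
/- Let n ≥ 1 and v ∈ 𝔖_{n+1}. Let S_p(v) = {v(n+2−p),…,v(n+1)} for 1 ≤ p ≤ n, and define w_i := ẽ_{v(i+1)} − ẽ_{v(i)} ∈ ℤⁿ for 1 ≤ i ≤ n, where ẽ_s = e_s for 1 ≤ s ≤ n and ẽ_{n+1} = 0. Then for all 1 ≤ i ≤ n and 1 ≤ p ≤ n, the standard pairing satisfies ⟨w_i, u_{S_p(v)}⟩ = 1 if i = n+1−p, and ⟨w_i, u_{S_p(v)}⟩ = 0 otherwise. That is, (w_n, w_{n−1}, …, w_1) is the dual basis of (u_{S_1(v)}, …, u_{S_n(v)}). -/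
/-- The maximal chain associated to a permutation `v ∈ 𝔖_{n+1}`:
`S_p(v) = {v(n+2−p), …, v(n+1)}` (1-indexed); here `p : Fin n` (0-indexed)
corresponds to the subset of size `p+1`. -/
def chainOfPerm (n : ℕ) (v : Equiv.Perm (Fin (n + 1))) : Fin n → Finset (Fin (n + 1)) :=
  fun p => (Finset.univ.filter (fun i : Fin (n + 1) => n - (p : ℕ) ≤ (i : ℕ))).image v

lemma permEps_sum_apply (n : ℕ) (S : Finset (Fin (n + 1))) (t : Fin n) :
    (∑ s ∈ S, permEps n s) t = if t.castSucc ∈ S then 1 else 0 := by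
  rw [Finset.sum_apply]
  have h : ∀ s : Fin (n + 1), permEps n s t = if t.castSucc = s then 1 else 0 := by
    intro s
    simp [permEps, Fin.ext_iff]
  simp [h]

lemma permU_apply (n : ℕ) (S : Finset (Fin (n + 1))) (t : Fin n) :
    permU n S t = (if t.castSucc ∈ S then 1 else 0) - (if Fin.last n ∈ S then 1 else 0) := by
  unfold permU
  by_cases h : Fin.last n ∈ S
  · rw [if_pos h, if_pos h, Pi.neg_apply, permEps_sum_apply]
    by_cases h2 : t.castSucc ∈ S <;> simp [h2]
  · rw [if_neg h, if_neg h, permEps_sum_apply, sub_zero]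

lemma permEps_pair (n : ℕ) (S : Finset (Fin (n + 1))) (s : Fin (n + 1)) :
    (∑ t, permEps n s t * permU n S t) =
      (if s ∈ S then 1 else 0) - (if Fin.last n ∈ S then 1 else 0) := by
  induction s using Fin.lastCases with
  | last =>
    rw [sub_self]
    refine Finset.sum_eq_zero fun t _ => ?_
    have := t.isLt
    simp [permEps, this.ne]
  | cast j =>
    have h : ∀ t : Fin n, permEps n j.castSucc t = if t = j then 1 else 0 := by
      intro t
      simp [permEps, Fin.ext_iff]
    simp [h, permU_apply]

lemma mem_chainOfPerm (n : ℕ) (v : Equiv.Perm (Fin (n + 1))) (p : Fin n) (j : Fin (n + 1)) :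
    v j ∈ chainOfPerm n v p ↔ n - (p : ℕ) ≤ (j : ℕ) := by
  simp [chainOfPerm]

/-- For `v ∈ 𝔖_{n+1}`, the weights `w_i = ẽ_{v(i+1)} − ẽ_{v(i)}` (for `1 ≤ i ≤ n`,
here `i : Fin n` is 0-indexed, so `w_i = ẽ_{v(i.succ)} − ẽ_{v(i.castSucc)}`) pair with
the ray generators `u_{S_p(v)}` as a dual basis: `⟨w_i, u_{S_p(v)}⟩ = 1` iff the
1-indexed `i` equals `n+1−p`, i.e. iff `i + p + 1 = n` in 0-indexed terms, and `= 0`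
otherwise. -/
theorem weights_dual_to_rays (n : ℕ) (hn : 1 ≤ n) (v : Equiv.Perm (Fin (n + 1)))
    (i p : Fin n) :
    (∑ t, (permEps n (v i.succ) t - permEps n (v i.castSucc) t) *
        permU n (chainOfPerm n v p) t) =
      if (i : ℕ) + (p : ℕ) + 1 = n then 1 else 0 := by
  simp only [sub_mul, Finset.sum_sub_distrib, permEps_pair, mem_chainOfPerm, Fin.val_succ,
    Fin.val_castSucc]
  have := i.isLt
  have := p.isLt
  split_ifs <;> omega
end

section
/- Fix flag Bott data, ℓ, S, the permutation matrices B_p, the row vectors r^ℓ_i, and the vector u^ℓ_S ∈ ℤ^N as in the context. Then for every 1 ≤ i ≤ n_ℓ+1: if n_ℓ+1 ∉ S, then ⟨r^ℓ_i, u^ℓ_S⟩ = 0 for i ≤ d and ⟨r^ℓ_i, u^ℓ_S⟩ = 1 for i > d; and if n_ℓ+1 ∈ S, then ⟨r^ℓ_i, u^ℓ_S⟩ = −1 for i ≤ d and ⟨r^ℓ_i, u^ℓ_S⟩ = 0 for i > d. Consequently ⟨r^ℓ_{i+1} − r^ℓ_i, u^ℓ_S⟩ = 1 if i = d and 0 otherwise,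 for 1 ≤ i ≤ n_ℓ. -/
/-- The permutation `v_{ℓ,S}` of `[n_ℓ+1]` (given on underlying natural numbers):
it lists the elements of `[n_ℓ+1] ∖ S` in increasing order followed by the elements
of `S` in increasing order. -/
def vPermNat {m : ℕ} (n : Fin m → ℕ) (l : Fin m) (S : Finset (Fin (n l + 1)))
    (a : ℕ) : ℕ :=
  ((Sᶜ.sort (· ≤ ·) ++ S.sort (· ≤ ·)).getD a ⟨0, Nat.succ_pos (n l)⟩ : Fin (n l + 1)).val

/-- The permutation matrices `B_p`: `B_ℓ` is the matrix with `(B_ℓ)_{a,b} = 1` iff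
`b = v_{ℓ,S}(a)`, and `B_p` is the identity matrix of size `n_p+1` for `p ≠ ℓ`. -/
def Bmat {m : ℕ} (n : Fin m → ℕ) (l : Fin m) (S : Finset (Fin (n l + 1)))
    (p : Fin m) : Matrix (Fin (n p + 1)) (Fin (n p + 1)) ℤ :=
  Matrix.of fun a b =>
    if p = l then (if (b : ℕ) = vPermNat n l S (a : ℕ) then 1 else 0)
    else (if a = b then 1 else 0)

/-- The product `(B_j A^{(j)}_{i_r})(B_{i_r} A^{(i_r)}_{i_{r−1}}) ⋯ (B_{i_1} A^{(i_1)}_q)`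
along a list `[i₁, …, i_r]` (listed in increasing order); the empty list yields
`B_j A^{(j)}_q`. -/
def chainProdB {m : ℕ} (n : Fin m → ℕ)
    (A : ∀ j p : Fin m, Matrix (Fin (n j + 1)) (Fin (n p + 1)) ℤ)
    (B : ∀ p : Fin m, Matrix (Fin (n p + 1)) (Fin (n p + 1)) ℤ)
    (j : Fin m) : List (Fin m) → ∀ q : Fin m, Matrix (Fin (n j + 1)) (Fin (n q + 1)) ℤ
  | [], q => B j * A j q
  | i :: L, q => chainProdB n A B j L i * (B i * A i q)

/-- `X^{(j)}_q := Σ (B_j A^{(j)}_{i_r})(B_{i_r} A^{(i_r)}_{i_{r−1}}) ⋯ (B_{i_1} A^{(i_1)}_q) B_q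
+ B_j A^{(j)}_q B_q`, summed over all strictly increasing sequences
`q < i₁ < ⋯ < i_r < j` with `r ≥ 1` (nonempty subsets of the interval `(q,j)`);
the empty subset contributes the extra term `B_j A^{(j)}_q B_q`. -/
def Xmat {m : ℕ} (n : Fin m → ℕ)
    (A : ∀ j p : Fin m, Matrix (Fin (n j + 1)) (Fin (n p + 1)) ℤ)
    (B : ∀ p : Fin m, Matrix (Fin (n p + 1)) (Fin (n p + 1)) ℤ)
    (j q : Fin m) : Matrix (Fin (n j + 1)) (Fin (n q + 1)) ℤ :=
  ∑ T ∈ (Finset.Ioo q j).powerset, chainProdB n A B j (T.sort (· ≤ ·)) q * B q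

/-- The `i`-th row `r^j_i ∈ ℤ^N` of the block matrix
`[X^{(j)}_1 X^{(j)}_2 ⋯ X^{(j)}_{j−1} B_j 0 ⋯ 0]`, where the coordinates of `ℤ^N`,
`N = Σ_p (n_p+1)`, are indexed by pairs `(p,k)` with `p ∈ [m]`, `k ∈ [n_p+1]`. -/
def rvec {m : ℕ} (n : Fin m → ℕ)
    (A : ∀ j p : Fin m, Matrix (Fin (n j + 1)) (Fin (n p + 1)) ℤ)
    (B : ∀ p : Fin m, Matrix (Fin (n p + 1)) (Fin (n p + 1)) ℤ)
    (j : Fin m) (i : Fin (n j + 1)) : (Σ p : Fin m, Fin (n p + 1)) → ℤ :=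
  fun x =>
    if x.1 < j then Xmat n A B j x.1 i x.2
    else if h : x.1 = j then B j i (Fin.cast (by rw [h]) x.2)
    else 0

/-- The vector `u^ℓ_S ∈ ℤ^N`: its `(ℓ,s)`-coordinate is `1` for `s ∈ S`
(resp. `−1` for `s ∈ [n_ℓ+1]∖S`) when `n_ℓ+1 ∉ S` (resp. `n_ℓ+1 ∈ S`); for `p > ℓ`
and `1 ≤ k ≤ n_p` its `(p,k)`-coordinate is
`−((A^{(p)}_ℓ)_{k,d+1}+⋯+(A^{(p)}_ℓ)_{k,n_ℓ+1})` when `n_ℓ+1 ∉ S` and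
`(A^{(p)}_ℓ)_{k,1}+⋯+(A^{(p)}_ℓ)_{k,d}` when `n_ℓ+1 ∈ S`, where `d = |[n_ℓ+1]∖S|`;
all remaining coordinates are `0`. -/
def uNvec {m : ℕ} (n : Fin m → ℕ)
    (A : ∀ j p : Fin m, Matrix (Fin (n j + 1)) (Fin (n p + 1)) ℤ)
    (l : Fin m) (S : Finset (Fin (n l + 1))) : (Σ p : Fin m, Fin (n p + 1)) → ℤ :=
  fun x =>
    if h : x.1 = l then
      (if Fin.last (n l) ∈ S then (if Fin.cast (by rw [h]) x.2 ∈ S then 0 else -1)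
       else (if Fin.cast (by rw [h]) x.2 ∈ S then 1 else 0))
    else if l < x.1 then
      (if (x.2 : ℕ) < n x.1 then
        (if Fin.last (n l) ∈ S then
          ∑ z ∈ Finset.univ.filter (fun z : Fin (n l + 1) => (z : ℕ) < Sᶜ.card),
            A x.1 l x.2 z
         else
          -∑ z ∈ Finset.univ.filter (fun z : Fin (n l + 1) => Sᶜ.card ≤ (z : ℕ)),
            A x.1 l x.2 z)
       else 0)
    else 0

theorem pairing_aux_list {k : ℕ} (S : Finset (Fin (k + 1))) (i : Fin (k + 1)) (z : Fin (k + 1)) :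
    ((Sᶜ.sort (· ≤ ·) ++ S.sort (· ≤ ·)).getD i z ∈ S) ↔ Sᶜ.card ≤ (i : ℕ) := by
  have hc : Sᶜ.card + S.card = k + 1 := by
    have := Finset.card_compl_add_card S
    simpa using this
  by_cases h : Sᶜ.card ≤ (i : ℕ)
  · have h2 : (i : ℕ) - (Sᶜ.sort (· ≤ ·)).length < (S.sort (· ≤ ·)).length := by
      have := i.2
      rw [Finset.length_sort, Finset.length_sort]; omega
    rw [List.getD_append_right _ _ _ _ (by rw [Finset.length_sort]; exact h),
      List.getD_eq_getElem _ _ h2]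
    simp only [h, iff_true]
    exact (Finset.mem_sort (· ≤ ·)).1 (List.getElem_mem h2)
  · have h2 : (i : ℕ) < (Sᶜ.sort (· ≤ ·)).length := by
      rw [Finset.length_sort]; omega
    rw [List.getD_append _ _ _ _ h2, List.getD_eq_getElem _ _ h2]
    simp only [h, iff_false]
    exact Finset.mem_compl.1 ((Finset.mem_sort (· ≤ ·)).1 (List.getElem_mem h2))

theorem pairing_aux_sum {m : ℕ} (n : Fin m → ℕ)
    (A : ∀ j p : Fin m, Matrix (Fin (n j + 1)) (Fin (n p + 1)) ℤ)
    (l : Fin m) (S : Finset (Fin (n l + 1))) (i : Fin (n l + 1)) :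
    (∑ x : Σ p : Fin m, Fin (n p + 1),
      rvec n A (Bmat n l S) l i x * uNvec n A l S x) =
    if Fin.last (n l) ∈ S then (if Sᶜ.card ≤ (i : ℕ) then 0 else -1)
       else (if Sᶜ.card ≤ (i : ℕ) then 1 else 0) := by
  rw [Fintype.sum_sigma, Finset.sum_eq_single l]
  · rw [Finset.sum_eq_single
      ((Sᶜ.sort (· ≤ ·) ++ S.sort (· ≤ ·)).getD i ⟨0, Nat.succ_pos (n l)⟩)]
    · simp only [← pairing_aux_list S i ⟨0, Nat.succ_pos (n l)⟩]
      simp [rvec, uNvec, Bmat, vPermNat]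
    · intro b _ hb
      have : ¬ (b : ℕ) = vPermNat n l S (i : ℕ) := fun h => hb (Fin.ext h)
      simp [rvec, Bmat, this]
    · simp
  · intro p _ hp
    apply Finset.sum_eq_zero
    intro k _
    rcases lt_or_gt_of_ne hp with h | h
    · simp [uNvec, hp, h.not_gt]
    · simp [rvec, hp, h.not_gt]
  · simp

/-- The pairings of the rows `r^ℓ_i` of `[X^{(ℓ)}_1 ⋯ X^{(ℓ)}_{ℓ−1} B_ℓ 0 ⋯ 0]` with
`u^ℓ_S` (`i : Fin (n_ℓ+1)` is 0-indexed, so 1-indexed `i ≤ d` reads `(i:ℕ) < d`,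
with `d = |Sᶜ|`): if `n_ℓ+1 ∉ S` they are `0` for `i ≤ d` and `1` for `i > d`; if
`n_ℓ+1 ∈ S` they are `−1` for `i ≤ d` and `0` for `i > d`. Consequently
`⟨r^ℓ_{i+1} − r^ℓ_i, u^ℓ_S⟩ = 1` if `i = d` and `0` otherwise, for `1 ≤ i ≤ n_ℓ`. -/
theorem pairing_r_uN_diag (m : ℕ) (n : Fin m → ℕ) (hn : ∀ p, 1 ≤ n p)
    (A : ∀ j p : Fin m, Matrix (Fin (n j + 1)) (Fin (n p + 1)) ℤ)
    (l : Fin m) (S : Finset (Fin (n l + 1)))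
    (hne : S.Nonempty) (hproper : S ≠ Finset.univ) :
    (∀ i : Fin (n l + 1),
      (Fin.last (n l) ∉ S →
        (((i : ℕ) < Sᶜ.card →
          (∑ x : Σ p : Fin m, Fin (n p + 1),
            rvec n A (Bmat n l S) l i x * uNvec n A l S x) = 0) ∧
         (Sᶜ.card ≤ (i : ℕ) →
          (∑ x : Σ p : Fin m, Fin (n p + 1),
            rvec n A (Bmat n l S) l i x * uNvec n A l S x) = 1))) ∧
      (Fin.last (n l) ∈ S →
        (((i : ℕ) < Sᶜ.card →
          (∑ x : Σ p : Fin m, Fin (n p + 1),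
            rvec n A (Bmat n l S) l i x * uNvec n A l S x) = -1) ∧
         (Sᶜ.card ≤ (i : ℕ) →
          (∑ x : Σ p : Fin m, Fin (n p + 1),
            rvec n A (Bmat n l S) l i x * uNvec n A l S x) = 0)))) ∧
    (∀ i : Fin (n l),
      (∑ x : Σ p : Fin m, Fin (n p + 1),
        (rvec n A (Bmat n l S) l i.succ x - rvec n A (Bmat n l S) l i.castSucc x) *
          uNvec n A l S x) =
      if (i : ℕ) + 1 = Sᶜ.card then 1 else 0) := by
  refine ⟨fun i => ⟨fun h => ⟨fun hi => ?_, fun hi => ?_⟩, fun h => ⟨fun hi => ?_, fun hi => ?_⟩⟩,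
    fun i => ?_⟩
  · rw [pairing_aux_sum, if_neg h, if_neg (by omega)]
  · rw [pairing_aux_sum, if_neg h, if_pos hi]
  · rw [pairing_aux_sum, if_pos h, if_neg (by omega)]
  · rw [pairing_aux_sum, if_pos h, if_pos hi]
  · simp only [sub_mul, Finset.sum_sub_distrib, pairing_aux_sum, Fin.val_succ, Fin.val_castSucc]
    split_ifs <;> first | omega | rfl
end

section
/- Fix flag Bott data n₁,…,n_m and matrices A^{(j)}_ℓ as in the context. For every x ∈ ℝⁿ there exist maximal chains S^ℓ_• : ∅ ⊊ S^ℓ_1 ⊊ ⋯ ⊊ S^ℓ_{n_ℓ} ⊊ [n_ℓ+1] for 1 ≤ ℓ ≤ m, and nonnegative real numbers a_{ℓ,p} (1 ≤ p ≤ n_ℓ, 1 ≤ ℓ ≤ m), such that x = Σ_{ℓ=1}^m Σ_{p=1}^{n_ℓ} a_{ℓ,p} u^ℓ_{S^ℓ_p}. In other words, the cones generated by the vectors associated to tuples of maximal chains cover ℝⁿ (completeness of the fan of the generic torus orbit closure in the flag Bott manifold). -/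
theorem fbAux_eval_zero (m : ℕ) (n : Fin m → ℕ)
    (A : ∀ j l : Fin m, Matrix (Fin (n j + 1)) (Fin (n l + 1)) ℤ)
    (l : Fin m) (S : Finset (Fin (n l + 1))) (i : Σ q : Fin m, Fin (n q)) (hi : i.1 < l) :
    fbU m n A l S i = 0 := by
  have h1 : ∀ s, fbEps m n l s i = 0 := fun s => by
    simp [fbEps, hi.ne]
  have h2 : ∀ (c : ℤ) p k, (if l < p then c else 0) * fbEps m n p k i = 0 := fun c p k => by
    by_cases hp : l < p
    · simp [fbEps, (hi.trans hp).ne]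
    · simp [hp]
  unfold fbU
  split_ifs <;>
    simp only [Finset.sum_apply, Pi.add_apply, Pi.neg_apply, Pi.sub_apply, Pi.smul_apply,
      smul_eq_mul, h1, h2, Finset.sum_const_zero] <;> simp

theorem fbAux_eval_diag (m : ℕ) (n : Fin m → ℕ)
    (A : ∀ j l : Fin m, Matrix (Fin (n j + 1)) (Fin (n l + 1)) ℤ)
    (l : Fin m) (S : Finset (Fin (n l + 1))) (j : Fin (n l)) :
    fbU m n A l S ⟨l, j⟩ =
      (if j.castSucc ∈ S then 1 else 0) - (if Fin.last (n l) ∈ S then 1 else 0) := by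
  have h1 : ∀ s, fbEps m n l s ⟨l, j⟩ = if j.castSucc = s then 1 else 0 := fun s => by
    simp [fbEps, Fin.ext_iff]
  have h2 : ∀ (c : ℤ) p k, (if l < p then c else 0) * fbEps m n p k ⟨l, j⟩ = 0 :=
    fun c p k => by
    by_cases hp : l < p
    · simp [fbEps, hp.ne]
    · simp [hp]
  unfold fbU
  by_cases hl : Fin.last (n l) ∈ S <;> by_cases hj : j.castSucc ∈ S <;>
    simp only [Finset.sum_apply, Pi.add_apply, Pi.neg_apply, Pi.sub_apply, Pi.smul_apply,
      smul_eq_mul, h1, h2, Finset.sum_const_zero, hl, hj, if_true, if_false] <;> simp [hl, hj]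

theorem fbAux_sum (N : ℕ) (w : ℕ → ℝ) (j : ℕ) (hj : j ≤ N) :
    ∑ p : Fin N, (w p - w (p + 1)) * (if j ≤ (p : ℕ) then 1 else 0) = w j - w N := by
  rw [Fin.sum_univ_eq_sum_range (fun p => (w p - w (p + 1)) * (if j ≤ p then 1 else 0)) N]
  induction N, hj using Nat.le_induction with
  | base =>
    rw [sub_self]
    apply Finset.sum_eq_zero
    intro p hp
    have : ¬ j ≤ p := by simpa using hp
    simp [this]
  | succ N hN ih =>
    rw [Finset.sum_range_succ, ih]
    simp [hN]

theorem fbAux_block (N : ℕ) (y : Fin N → ℝ) :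
    ∃ S : Fin N → Finset (Fin (N + 1)),
      ((∀ p, (S p).Nonempty) ∧ (∀ p, S p ≠ Finset.univ) ∧ (∀ p q, p < q → S p ⊂ S q)) ∧
      ∃ a : Fin N → ℝ, (∀ p, 0 ≤ a p) ∧
        ∀ j, ∑ p, a p * (((if j.castSucc ∈ S p then 1 else 0) -
          (if Fin.last N ∈ S p then 1 else 0) : ℤ) : ℝ) = y j := by
  let z : Fin (N + 1) → ℝ := Fin.snoc y 0
  let σ := Tuple.sort (fun i => - z i)
  have hσ : Monotone ((fun i => - z i) ∘ σ) := Tuple.monotone_sort _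
  let w : ℕ → ℝ := fun k => if h : k < N + 1 then z (σ ⟨k, h⟩) else 0
  have hS : ∀ (p : Fin N) (i : Fin (N + 1)),
      i ∈ Finset.univ.filter (fun i : Fin (N + 1) => ((σ.symm i : Fin (N + 1)) : ℕ) ≤ p) ↔
        ((σ.symm i : Fin (N + 1)) : ℕ) ≤ p := by simp
  have hw : ∀ i, w (σ.symm i : Fin (N + 1)) = z i := fun i => by
    simp only [w, dif_pos (σ.symm i).isLt, Fin.eta, Equiv.apply_symm_apply]
  refine ⟨fun p => Finset.univ.filter (fun i => ((σ.symm i : Fin (N + 1)) : ℕ) ≤ p),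
    ⟨fun p => ⟨σ 0, by simp⟩, fun p h => ?_, fun p q hpq => ?_⟩,
    fun p => w p - w (p + 1), fun p => ?_, fun j => ?_⟩
  · have := (hS p (σ (Fin.last N))).1 (by
      have h' := Finset.mem_univ (σ (Fin.last N))
      rwa [← h] at h')
    simp at this
    omega
  · rw [Finset.ssubset_iff_of_subset]
    · refine ⟨σ q.castSucc, by simp, by simpa using hpq⟩
    · intro i hi
      rw [hS] at hi ⊢
      have : (p : ℕ) < q := hpq
      omega
  · have h1 : (p : ℕ) < N + 1 := by omega
    have h2 : (p : ℕ) + 1 < N + 1 := by omega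
    have := hσ (show (⟨p, h1⟩ : Fin (N + 1)) ≤ ⟨p + 1, h2⟩ by simp [Fin.le_def])
    simp only [Function.comp] at this
    simp only [w, h1, h2, dif_pos]
    linarith
  · have key : ∀ i : Fin (N + 1), ∑ p : Fin N, (w p - w (p + 1)) *
        (if ((σ.symm i : Fin (N + 1)) : ℕ) ≤ p then 1 else 0) = z i - w N := fun i => by
      rw [fbAux_sum N w _ (by omega), hw]
    simp only [hS]
    push_cast
    simp only [mul_sub, Finset.sum_sub_distrib]
    rw [key, key]
    simp [z]

theorem fbAux_tri (m : ℕ) (n : Fin m → ℕ) (C : Fin m → Type)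
    (g : ∀ l, C l → (Σ q : Fin m, Fin (n q)) → ℝ)
    (h0 : ∀ l c i, i.1 < l → g l c i = 0)
    (h1 : ∀ l (y : Fin (n l) → ℝ), ∃ c, ∀ j, g l c ⟨l, j⟩ = y j)
    (x : (Σ q : Fin m, Fin (n q)) → ℝ) :
    ∃ c : ∀ l, C l, ∀ i, x i = ∑ l, g l (c l) i := by
  suffices H : ∀ k : ℕ, k ≤ m → ∃ c : ∀ l, C l, ∀ i : (Σ q : Fin m, Fin (n q)),
      (i.1 : ℕ) < k → x i = ∑ l, g l (c l) i by
    obtain ⟨c, hc⟩ := H m le_rfl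
    exact ⟨c, fun i => hc i i.1.2⟩
  intro k
  induction k with
  | zero =>
    intro _
    exact ⟨fun l => (h1 l 0).choose, fun i hi => absurd hi (by omega)⟩
  | succ k ih =>
    intro hk
    obtain ⟨c, hc⟩ := ih (by omega)
    let K : Fin m := ⟨k, hk⟩
    obtain ⟨d, hd⟩ := h1 K (fun j => x ⟨K, j⟩ - ∑ l ∈ Finset.univ.erase K, g l (c l) ⟨K, j⟩)
    have hoff : ∀ i, ∑ l ∈ Finset.univ.erase K, g l (Function.update c K d l) i
        = ∑ l ∈ Finset.univ.erase K, g l (c l) i := fun i =>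
      Finset.sum_congr rfl fun l hl => by
        rw [Function.update_of_ne (Finset.ne_of_mem_erase hl)]
    refine ⟨Function.update c K d, fun i hi => ?_⟩
    rw [← Finset.add_sum_erase _ _ (Finset.mem_univ K), hoff, Function.update_self]
    by_cases hik : (i.1 : ℕ) < k
    · rw [hc i hik, ← Finset.add_sum_erase _ _ (Finset.mem_univ K),
        h0 K d i hik, h0 K (c K) i hik]
    · obtain ⟨q, j⟩ := i
      have : q = K := Fin.ext (by simp only [K] at *; omega)
      subst this
      rw [hd]
      ring

/-- Completeness of the fan of the generic torus orbit closure in a flag Bott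
manifold: every `x ∈ ℝⁿ` is a nonnegative combination of the vectors `u^ℓ_{S^ℓ_p}`
associated to some `m`-tuple of maximal chains
`∅ ⊊ S^ℓ_1 ⊊ ⋯ ⊊ S^ℓ_{n_ℓ} ⊊ [n_ℓ+1]`. -/
theorem fbU_fan_complete (m : ℕ) (hm : 1 ≤ m)
    (n : Fin m → ℕ) (hn : ∀ l, 1 ≤ n l)
    (A : ∀ j l : Fin m, Matrix (Fin (n j + 1)) (Fin (n l + 1)) ℤ)
    (x : (Σ q : Fin m, Fin (n q)) → ℝ) :
    ∃ S : ∀ l : Fin m, Fin (n l) → Finset (Fin (n l + 1)),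
      ((∀ l p, (S l p).Nonempty) ∧ (∀ l p, S l p ≠ Finset.univ) ∧
        (∀ l, ∀ p q, p < q → S l p ⊂ S l q)) ∧
      ∃ a : ∀ l : Fin m, Fin (n l) → ℝ, (∀ l p, 0 ≤ a l p) ∧
        ∀ i, x i = ∑ l : Fin m, ∑ p : Fin (n l), a l p * (fbU m n A l (S l p) i : ℝ) := by
  let C : Fin m → Type := fun l => {c : (Fin (n l) → Finset (Fin (n l + 1))) × (Fin (n l) → ℝ) //
    ((∀ p, (c.1 p).Nonempty) ∧ (∀ p, c.1 p ≠ Finset.univ) ∧ (∀ p q, p < q → c.1 p ⊂ c.1 q)) ∧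
      ∀ p, 0 ≤ c.2 p}
  obtain ⟨c, hc⟩ := fbAux_tri m n C
    (fun l c i => ∑ p, c.1.2 p * (fbU m n A l (c.1.1 p) i : ℝ))
    (fun l c i hi => by simp [fbAux_eval_zero m n A l _ i hi])
    (fun l y => by
      obtain ⟨S, hS, a, ha, h⟩ := fbAux_block (n l) y
      refine ⟨⟨(S, a), hS, ha⟩, fun j => ?_⟩
      rw [← h j]
      simp only [fbAux_eval_diag]) x
  exact ⟨fun l => (c l).1.1, ⟨fun l => (c l).2.1.1, fun l => (c l).2.1.2.1,
    fun l => (c l).2.1.2.2⟩, fun l => (c l).1.2, fun l => (c l).2.2, hc⟩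
end
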